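/- Fix a node j ∈ {1,…,N} and define C_0 := {j} and, recursively for 1 ≤ r ≤ N−1, C_r := { i ∈ {1,…,N} \ (C_0 ∪ … ∪ C_{r−1}) : there exists τ ∈ [t_{r−1}, t_r) with N_i[τ] ∩ (C_0 ∪ … ∪ C_{r−1}) ≠ ∅ }. Then C_0 ∪ C_1 ∪ … ∪ C_{N−1} = {1,…,N}; moreover, whenever {1,…,N} \ (C_0 ∪ … ∪ C_{r−1}) is nonempty, C_r is nonempty. -/

import Mathlib

/-!
If the complement of `U = C_0 ∪ … ∪ C_{r-1}` is nonempty with `r ≥ 1`, then a path from `j ∈ U` to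
a node outside `U` in the strongly connected union graph over `[t_{r-1}, t_r)` has an edge `(l, i)`
leaving `U`, and its head `i` lies in `C_r` (`Csets_nonempty_of_notMem`). Hence the union over
`q < r` gains at least one new node at every step until it is everything, so it has at least `r`
nodes or is everything (`le_ncard_iUnion_Csets`); for `r = N` both alternatives give all nodes.
-/

/-- The recursively defined sets `C_0 = {j}` and, for `1 ≤ r`,
`C_r = { i ∉ C_0 ∪ … ∪ C_{r−1} : ∃ τ ∈ [t_{r−1}, t_r), N_i[τ] ∩ (C_0 ∪ … ∪ C_{r−1}) ≠ ∅ }`. -/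
def Csets {N : ℕ} (Nbrs : Fin N → ℕ → Set (Fin N)) (t : ℕ → ℕ) (j : Fin N) :
    ℕ → Set (Fin N)
  | 0 => {j}
  | r + 1 =>
    { i | (∀ q, q ≤ r → i ∉ Csets Nbrs t j q) ∧
        ∃ τ, t r ≤ τ ∧ τ < t (r + 1) ∧
          ∃ l ∈ Nbrs i τ, ∃ q, ∃ _ : q ≤ r, l ∈ Csets Nbrs t j q }
  decreasing_by all_goals omega

/-- A path from a node satisfying `P` to one violating it contains an edge that leaves `P`. -/
lemma exists_leaving_edge {α : Type*} {R : α → α → Prop} {P : α → Prop} {a b : α}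
    (h : Relation.ReflTransGen R a b) (ha : P a) (hb : ¬ P b) :
    ∃ l i, R l i ∧ P l ∧ ¬ P i := by
  induction h with
  | refl => exact absurd ha hb
  | @tail c d _ hcd ih =>
    by_cases hc : P c
    · exact ⟨c, d, hcd, hc, hb⟩
    · exact ih hc

/-- `C_{r+1}` contains the head of an edge leaving `C_0 ∪ … ∪ C_r` as soon as some node `a` is not
yet covered. -/
lemma Csets_nonempty_of_notMem {N : ℕ} {Nbrs : Fin N → ℕ → Set (Fin N)} {t : ℕ → ℕ}
    (hC3 : ∀ q, ∀ a b : Fin N,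
      Relation.ReflTransGen
        (fun l i => ∃ τ', t q ≤ τ' ∧ τ' < t (q + 1) ∧ l ∈ Nbrs i τ') a b)
    (j : Fin N) (r : ℕ) {a : Fin N} (ha : ∀ q, q ≤ r → a ∉ Csets Nbrs t j q) :
    (Csets Nbrs t j (r + 1)).Nonempty := by
  obtain ⟨l, i, ⟨τ, h1, h2, hl⟩, ⟨q, hq, hlq⟩, hi⟩ :=
    exists_leaving_edge (P := fun x => ∃ q, q ≤ r ∧ x ∈ Csets Nbrs t j q) (hC3 r j a)
      ⟨0, Nat.zero_le r, by rw [Csets]; rfl⟩ (fun ⟨q, hq, h⟩ => ha q hq h)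
  refine ⟨i, ?_⟩
  rw [Csets]
  exact ⟨fun q hq h => hi ⟨q, hq, h⟩, τ, h1, h2, l, hl, q, hq, hlq⟩

/-- Each of `C_0, C_1, …` contributes a new node until all nodes are covered. -/
lemma le_ncard_iUnion_Csets {N : ℕ} {Nbrs : Fin N → ℕ → Set (Fin N)} {t : ℕ → ℕ}
    (hC3 : ∀ q, ∀ a b : Fin N,
      Relation.ReflTransGen
        (fun l i => ∃ τ', t q ≤ τ' ∧ τ' < t (q + 1) ∧ l ∈ Nbrs i τ') a b)
    (j : Fin N) (r : ℕ) :
    (⋃ q ∈ Set.Iic r, Csets Nbrs t j q) = Set.univ ∨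
      r + 1 ≤ (⋃ q ∈ Set.Iic r, Csets Nbrs t j q).ncard := by
  induction r with
  | zero =>
    right
    rw [Nat.succ_le_iff, Set.ncard_pos]
    exact ⟨j, Set.mem_biUnion (Set.mem_Iic.2 le_rfl) (by rw [Csets]; rfl)⟩
  | succ r ih =>
    have hsub : (⋃ q ∈ Set.Iic r, Csets Nbrs t j q) ⊆ ⋃ q ∈ Set.Iic (r + 1), Csets Nbrs t j q :=
      Set.biUnion_subset_biUnion_left (Set.Iic_subset_Iic.2 r.le_succ)
    by_cases hU : (⋃ q ∈ Set.Iic r, Csets Nbrs t j q) = Set.univ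
    · exact .inl (Set.univ_subset_iff.1 (hU ▸ hsub))
    · right
      obtain ⟨a, ha⟩ := (Set.ne_univ_iff_exists_notMem _).1 hU
      obtain ⟨i, hi⟩ := Csets_nonempty_of_notMem hC3 j r (a := a)
        fun q hq h => ha (Set.mem_biUnion (Set.mem_Iic.2 hq) h)
      have hiU : i ∉ ⋃ q ∈ Set.Iic r, Csets Nbrs t j q := by
        rw [Csets] at hi
        simpa using hi.1
      exact (Nat.succ_le_succ (ih.resolve_left hU)).trans <| Nat.succ_le_of_lt <|
        Set.ncard_lt_ncard <| (Set.ssubset_iff_of_subset hsub).2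
          ⟨i, Set.mem_biUnion (Set.mem_Iic.2 le_rfl) hi, hiU⟩

/-- **Spreading of information (inner argument of Lemma 3)**: under condition (C3), the
recursively defined sets `C_0, …, C_{N−1}` cover all nodes, and `C_r` is nonempty whenever
the complement of `C_0 ∪ … ∪ C_{r−1}` is nonempty. -/
theorem Csets_cover
    {N : ℕ}
    (Nbrs : Fin N → ℕ → Set (Fin N)) (hNbrs : ∀ i k, i ∉ Nbrs i k)
    (t : ℕ → ℕ) (ht0 : t 0 = 0) (htmono : StrictMono t)
    -- (C3): the union graph over each interval [t_q, t_{q+1}) is strongly connected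
    (hC3 : ∀ q, ∀ a b : Fin N,
      Relation.ReflTransGen
        (fun l i => ∃ τ', t q ≤ τ' ∧ τ' < t (q + 1) ∧ l ∈ Nbrs i τ') a b)
    (j : Fin N) :
    (⋃ r ∈ Set.Iic (N - 1), Csets Nbrs t j r) = Set.univ ∧
    ∀ r : ℕ, 0 < r →
      (Set.univ \ ⋃ q ∈ Set.Iio r, Csets Nbrs t j q).Nonempty →
      (Csets Nbrs t j r).Nonempty := by
  constructor
  · refine (le_ncard_iUnion_Csets hC3 j (N - 1)).elim id fun h => ?_
    -- `N - 1 + 1 = N` because `j : Fin N` forces `N ≠ 0`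
    have hN : N - 1 + 1 = N := Nat.sub_add_cancel j.pos
    refine Set.eq_of_subset_of_ncard_le (Set.subset_univ _) ?_
    rw [Set.ncard_univ, Nat.card_fin]
    omega
  · rintro (_ | r) hr ⟨a, -, ha⟩
    · exact absurd hr (lt_irrefl 0)
    · exact Csets_nonempty_of_notMem hC3 j r fun q hq h =>
        ha (Set.mem_biUnion (Set.mem_Iio.2 (Nat.lt_succ_of_le hq)) h)
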